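/- arXiv:2008.12437 — 3 statements merged into one kernel-verified Lean document; each statement's English description precedes it below -/
import Mathlib

section
/- Let V be a finite-dimensional representation of a group G over a field k and let m be an integer with 0 < m < dim V. If V is m-dense then V is m-thick. -/
/-!
An alternating `m`-form on `V` is a linear functional on `⋀^m V`. When `⋀^m V` is irreducible, the
translates of a nonzero decomposable vector `v₁ ∧ ⋯ ∧ vₘ` span it, so a nonzero form cannot vanish
on all the families `ρ(g) v`. Apply this to a basis `v` of `V₁` and to the pullback along
`V → V ⧸ V₂` of the determinant on the `m`-dimensional space `V ⧸ V₂`: its nonvanishing on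
`ρ(g) v` says that `ρ(g) v` is a basis of `V` modulo `V₂`, i.e. that `ρ(g) V₁` is a complement
of `V₂`.
-/

open Module

variable {k G V : Type*} [Field k] [Group G] [AddCommGroup V] [Module k V]

/-- A finite-dimensional representation `ρ : G → GL(V)` is `m`-thick if for any subspaces
`V₁, V₂ ⊆ V` with `dim V₁ = m` and `dim V₂ = dim V - m` there is `g ∈ G` with
`(ρ(g) V₁) ⊕ V₂ = V`. -/
def IsMThick (ρ : Representation k G V) (m : ℕ) : Prop :=
  ∀ V₁ V₂ : Submodule k V, finrank k V₁ = m → finrank k V₂ = finrank k V - m →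
    ∃ g : G, IsCompl (V₁.map (ρ g)) V₂

/-- A representation is `m`-dense if the induced representation on the `m`-th exterior power
`⋀^m V` (a submodule of the exterior algebra, on which `g` acts by the functorially induced map)
is irreducible: `⋀^m V` is nonzero and has no `G`-invariant subspace other than `0` and itself. -/
def IsMDense (ρ : Representation k G V) (m : ℕ) : Prop :=
  ⋀[k]^m V ≠ ⊥ ∧
  ∀ W : Submodule k (ExteriorAlgebra k V), W ≤ ⋀[k]^m V →
    (∀ g : G, W.map (ExteriorAlgebra.map (ρ g)).toLinearMap ≤ W) →
    W = ⊥ ∨ W = ⋀[k]^m V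

/-- A representation is irreducible if `V` is nonzero and has no `G`-invariant subspace
other than `0` and `V`. -/
def RepIrreducible (ρ : Representation k G V) : Prop :=
  (∃ v : V, v ≠ 0) ∧
  ∀ W : Submodule k V, (∀ g : G, W.map (ρ g) ≤ W) → W = ⊥ ∨ W = ⊤

/-- A representation is thick if it is `m`-thick for every `0 < m < dim V`. -/
def IsThick (ρ : Representation k G V) : Prop :=
  ∀ m : ℕ, 0 < m → m < finrank k V → IsMThick ρ m

/-- A representation is dense if it is `m`-dense for every `0 < m < dim V`. -/
def IsDense (ρ : Representation k G V) : Prop :=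
  ∀ m : ℕ, 0 < m → m < finrank k V → IsMDense ρ m

section Complements

variable {ι R M N : Type*}

theorem isCompl_span_range_ker [Ring R] [AddCommGroup M] [Module R M] [AddCommGroup N] [Module R N]
    {f : M →ₗ[R] N} {v : ι → M} (hli : LinearIndependent R (f ∘ v))
    (hspan : Submodule.span R (Set.range (f ∘ v)) = ⊤) :
    IsCompl (Submodule.span R (Set.range v)) (LinearMap.ker f) := by
  rw [Set.range_comp, ← Submodule.map_span] at hspan
  have hf : LinearMap.range f = ⊤ := top_le_iff.mp (hspan.ge.trans LinearMap.map_le_range)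
  exact ⟨Submodule.range_ker_disjoint hli,
    codisjoint_iff.mpr ((LinearMap.map_eq_top_iff hf).mp hspan)⟩

theorem isCompl_span_range_of_isUnit_det_mkQ [CommRing R] [AddCommGroup M] [Module R M]
    [Fintype ι] [DecidableEq ι] {p : Submodule R M} (b : Basis ι R (M ⧸ p)) {v : ι → M}
    (hdet : IsUnit (b.det (p.mkQ ∘ v))) : IsCompl (Submodule.span R (Set.range v)) p := by
  obtain ⟨hli, hspan⟩ := b.is_basis_iff_det.mpr hdet
  simpa only [p.ker_mkQ] using isCompl_span_range_ker hli hspan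

theorem map_eq_span_range_of_basis [Semiring R] [AddCommMonoid M] [Module R M] [AddCommMonoid N]
    [Module R N] {p : Submodule R M} (v : Basis ι R p) (f : M →ₗ[R] N) :
    p.map f = Submodule.span R (Set.range (f ∘ (↑) ∘ v)) := by
  have hspan : Submodule.span R (Set.range ((↑) ∘ v)) = p := by
    rw [Set.range_comp, ← p.coe_subtype, ← Submodule.map_span, v.span_eq, p.map_subtype_top]
  rw [Set.range_comp, ← Submodule.map_span, hspan]

end Complements

section ExteriorPowers

variable {R M N : Type*} [CommRing R] [AddCommGroup M] [Module R M] [AddCommGroup N] [Module R N]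

theorem map_exteriorPower_le (f : M →ₗ[R] N) (n : ℕ) :
    (⋀[R]^n M).map (ExteriorAlgebra.map f).toLinearMap ≤ ⋀[R]^n N := by
  rw [← ExteriorAlgebra.ιMulti_span_fixedDegree, Submodule.map_span_le]
  rintro _ ⟨v, rfl⟩
  rw [AlgHom.toLinearMap_apply, ExteriorAlgebra.map_apply_ιMulti]
  exact ExteriorAlgebra.ιMulti_range R n ⟨f ∘ v, rfl⟩

theorem liftAlternating_single_apply_ιMulti {n : ℕ} (φ : M [⋀^Fin n]→ₗ[R] N)
    (v : Fin n → M) :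
    ExteriorAlgebra.liftAlternating (Pi.single n φ) (ExteriorAlgebra.ιMulti R n v) = φ v := by
  rw [ExteriorAlgebra.liftAlternating_apply_ιMulti, Pi.single_eq_same]

theorem exists_alternatingMap_apply_eq_one {ι : Type*} [Finite ι] {v : ι → V}
    (hv : LinearIndependent k v) : ∃ φ : V [⋀^ι]→ₗ[k] k, φ v = 1 := by
  classical
  have := Fintype.ofFinite ι
  let b : Basis ι k (Submodule.span k (Set.range v)) := Basis.span hv
  obtain ⟨p, hp⟩ := (LinearMap.id : Submodule.span k (Set.range v) →ₗ[k] _).exists_extend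
  have hpv : p ∘ v = b := by
    funext i
    simpa [b, Basis.span_apply] using LinearMap.congr_fun hp (b i)
  refine ⟨b.det.compLinearMap p, ?_⟩
  exact (congrArg b.det hpv).trans b.det_self

theorem ιMulti_ne_zero_of_linearIndependent {n : ℕ} {v : Fin n → V}
    (hv : LinearIndependent k v) : ExteriorAlgebra.ιMulti k n v ≠ 0 := by
  obtain ⟨φ, hφ⟩ := exists_alternatingMap_apply_eq_one hv
  intro hzero
  have : φ v = 0 := by rw [← liftAlternating_single_apply_ιMulti, hzero, map_zero]
  exact one_ne_zero (hφ.symm.trans this)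

end ExteriorPowers

namespace IsMDense

variable {ρ : Representation k G V} {m : ℕ}

theorem span_orbit_eq (h : IsMDense ρ m) {x : ExteriorAlgebra k V} (hx : x ∈ ⋀[k]^m V)
    (hx₀ : x ≠ 0) :
    Submodule.span k (Set.range fun g ↦ ExteriorAlgebra.map (ρ g) x) = ⋀[k]^m V := by
  let W := Submodule.span k (Set.range fun g ↦ ExteriorAlgebra.map (ρ g) x)
  have hle : W ≤ ⋀[k]^m V := by
    rw [Submodule.span_le]
    rintro _ ⟨g, rfl⟩
    exact map_exteriorPower_le (ρ g) m ⟨x, hx, rfl⟩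
  have hinv (g : G) : W.map (ExteriorAlgebra.map (ρ g)).toLinearMap ≤ W := by
    rw [Submodule.map_span_le]
    rintro _ ⟨g', rfl⟩
    refine Submodule.subset_span ⟨g * g', ?_⟩
    simp [Module.End.mul_eq_comp, ← ExteriorAlgebra.map_comp_map]
  have hxW : x ∈ W := Submodule.subset_span ⟨1, by simp [Module.End.one_eq_id]⟩
  exact (h.2 W hle hinv).resolve_left fun hbot ↦ hx₀ ((Submodule.mem_bot k).mp (hbot ▸ hxW))

theorem exists_apply_comp_ne_zero (h : IsMDense ρ m) {N : Type*} [AddCommGroup N] [Module k N]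
    {φ : V [⋀^Fin m]→ₗ[k] N} (hφ : φ ≠ 0) {v : Fin m → V} (hv : LinearIndependent k v) :
    ∃ g : G, φ (ρ g ∘ v) ≠ 0 := by
  by_contra! hvanish
  let f := ExteriorAlgebra.liftAlternating (Pi.single m φ)
  have hker : ⋀[k]^m V ≤ LinearMap.ker f := by
    rw [← h.span_orbit_eq (ExteriorAlgebra.ιMulti_range k m ⟨v, rfl⟩)
      (ιMulti_ne_zero_of_linearIndependent hv), Submodule.span_le]
    rintro _ ⟨g, rfl⟩
    simpa [f, ExteriorAlgebra.map_apply_ιMulti, liftAlternating_single_apply_ιMulti]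
      using hvanish g
  refine hφ (AlternatingMap.ext fun u ↦ ?_)
  rw [← liftAlternating_single_apply_ιMulti]
  exact hker (ExteriorAlgebra.ιMulti_range k m ⟨u, rfl⟩)

end IsMDense

/-- If a finite-dimensional representation `V` is `m`-dense for `0 < m < dim V`,
then it is `m`-thick. -/
theorem mDense_implies_mThick [FiniteDimensional k V] (ρ : Representation k G V)
    (m : ℕ) (h0 : 0 < m) (hm : m < finrank k V) (h : IsMDense ρ m) :
    IsMThick ρ m := by
  intro V₁ V₂ h₁ h₂
  have hquot : finrank k (V ⧸ V₂) = m := by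
    have := V₂.finrank_quotient_add_finrank
    omega
  let v : Basis (Fin m) k V₁ := finBasisOfFinrankEq k V₁ h₁
  let b : Basis (Fin m) k (V ⧸ V₂) := finBasisOfFinrankEq k (V ⧸ V₂) hquot
  have hv : LinearIndependent k ((↑) ∘ v : Fin m → V) :=
    v.linearIndependent.map' V₁.subtype V₁.ker_subtype
  have hφ : b.det.compLinearMap V₂.mkQ ≠ 0 := fun hzero ↦
    b.det_ne_zero (AlternatingMap.compLinearMap_injective V₂.mkQ V₂.mkQ_surjective hzero)
  obtain ⟨g, hg⟩ := h.exists_apply_comp_ne_zero hφ hv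
  refine ⟨g, ?_⟩
  rw [map_eq_span_range_of_basis v]
  exact isCompl_span_range_of_isUnit_det_mkQ b (isUnit_iff_ne_zero.mpr hg)
end

section
/- Let V be an n-dimensional representation of a group G over a field k and let m be an integer with 0 < m < n. Then V is not m-thick if and only if there exist G-invariant realizable subspaces W₁ ⊆ ⋀^m V and W₂ ⊆ ⋀^{n−m} V such that W₁^⊥ = W₂. -/
/-!
A wedge of vectors is nonzero iff the vectors are linearly independent. Hence, for `m + p = dim V`,
the product of `a₁ ∧ ⋯ ∧ a_m` and `b₁ ∧ ⋯ ∧ b_p` is nonzero iff the spans of the two families are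
complementary, and failure of `m`-thickness becomes the vanishing of
`g (a₁ ∧ ⋯ ∧ a_m) ∧ (b₁ ∧ ⋯ ∧ b_{n-m})` for all `g`, for some independent families `a` and `b`.
Such families give `W₁`, the span of the orbit of `a₁ ∧ ⋯ ∧ a_m`, and `W₂ = W₁^⊥`; conversely they
are recovered from the pure wedges in any invariant realizable `W₁` and `W₂ = W₁^⊥`.
-/

open Module

variable {k G V : Type*} [Field k] [Group G] [AddCommGroup V] [Module k V]

/-- The right annihilator of a subspace `W` of the exterior algebra:
all `y` with `x ∧ y = 0` for every `x ∈ W`. -/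
def wedgeAnnihilator (W : Submodule k (ExteriorAlgebra k V)) :
    Submodule k (ExteriorAlgebra k V) where
  carrier := { y | ∀ x ∈ W, x * y = 0 }
  add_mem' := fun {a b} ha hb x hx => by rw [mul_add, ha x hx, hb x hx, add_zero]
  zero_mem' := fun x _ => mul_zero x
  smul_mem' := fun c y hy x hx => by
    simp only [Set.mem_setOf_eq] at hy ⊢
    rw [mul_smul_comm, hy x hx, smul_zero]

/-- For a subspace `W ⊆ ⋀^i V`, its perpendicular subspace
`W^⊥ = { y ∈ ⋀^j V : x ∧ y = 0 for all x ∈ W }`, defined via the wedge pairing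
`⋀^i V × ⋀^j V → ⋀^{i+j} V` given by multiplication in the exterior algebra. -/
def wedgePerp (j : ℕ) (W : Submodule k (ExteriorAlgebra k V)) :
    Submodule k (ExteriorAlgebra k V) :=
  ⋀[k]^j V ⊓ wedgeAnnihilator W

/-- A subspace `W ⊆ ⋀^d V` is realizable if it contains a nonzero vector
`v₁ ∧ ⋯ ∧ v_d` obtained from a basis `v₁, …, v_d` of a `d`-dimensional subspace of `V`. -/
def WedgeRealizable (d : ℕ) (W : Submodule k (ExteriorAlgebra k V)) : Prop :=
  ∃ v : Fin d → V, LinearIndependent k v ∧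
    ExteriorAlgebra.ιMulti k d v ∈ W ∧ ExteriorAlgebra.ιMulti k d v ≠ 0

lemma linearIndependent_append_iff {R M : Type*} [Ring R] [AddCommGroup M] [Module R M] {m p : ℕ}
    {a : Fin m → M} {b : Fin p → M} :
    LinearIndependent R (Fin.append a b) ↔ LinearIndependent R a ∧ LinearIndependent R b ∧
      Disjoint (Submodule.span R (Set.range a)) (Submodule.span R (Set.range b)) := by
  rw [← linearIndependent_equiv finSumFinEquiv, linearIndependent_sum]
  have append_inl : (Fin.append a b ∘ finSumFinEquiv) ∘ Sum.inl = a := by ext i; simp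
  have append_inr : (Fin.append a b ∘ finSumFinEquiv) ∘ Sum.inr = b := by ext i; simp
  rw [append_inl, append_inr]

lemma span_range_append {R M : Type*} [Semiring R] [AddCommMonoid M] [Module R M] {m p : ℕ}
    (a : Fin m → M) (b : Fin p → M) :
    Submodule.span R (Set.range (Fin.append a b)) =
      Submodule.span R (Set.range a) ⊔ Submodule.span R (Set.range b) := by
  rw [← Submodule.span_union, ← Set.Sum.elim_range, ← Fin.append_comp_sumElim,
    ← finSumFinEquiv.surjective.range_comp]
  congr 2

lemma linearIndependent_append_iff_isCompl {K E : Type*} [DivisionRing K] [AddCommGroup E]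
    [Module K E] [FiniteDimensional K E] {m p : ℕ} (hmp : m + p = finrank K E)
    {a : Fin m → E} {b : Fin p → E} :
    LinearIndependent K (Fin.append a b) ↔
      IsCompl (Submodule.span K (Set.range a)) (Submodule.span K (Set.range b)) := by
  have hcard : Fintype.card (Fin (m + p)) = finrank K E := by rw [Fintype.card_fin, hmp]
  refine ⟨fun h => ⟨(linearIndependent_append_iff.1 h).2.2, ?_⟩, fun h => ?_⟩
  · rw [codisjoint_iff, ← span_range_append]
    exact h.span_eq_top_of_card_eq_finrank' hcard
  · refine linearIndependent_of_top_le_span_of_card_eq_finrank ?_ hcard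
    rw [span_range_append, h.sup_eq_top]

lemma exists_linearIndependent_span_eq {R M : Type*} [Ring R] [StrongRankCondition R]
    [AddCommGroup M] [Module R M] {d : ℕ} (U : Submodule R M) [Module.Free R U]
    [Module.Finite R U] (hU : finrank R U = d) :
    ∃ v : Fin d → M, LinearIndependent R v ∧ Submodule.span R (Set.range v) = U := by
  let basis := finBasisOfFinrankEq R U hU
  refine ⟨U.subtype ∘ basis, basis.linearIndependent.map' U.subtype U.ker_subtype, ?_⟩
  rw [Set.range_comp, ← Submodule.map_span, basis.span_eq, Submodule.map_subtype_top]

lemma ιMulti_ne_zero_iff_linearIndependent {d : ℕ} {v : Fin d → V} :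
    ExteriorAlgebra.ιMulti k d v ≠ 0 ↔ LinearIndependent k v := by
  refine ⟨fun h => ?_, fun hv => ?_⟩
  · contrapose! h
    exact AlternatingMap.map_linearDependent _ v h
  · -- `ιMulti k d v` is the only member of the independent family of `d`-fold wedges of `v`.
    let full : Set.powersetCard (Fin d) d :=
      Set.powersetCard.ofFinEmbEquiv (RelEmbedding.refl (· ≤ ·))
    have hfull : (Set.powersetCard.ofFinEmbEquiv.symm full : Fin d → Fin d) = id := by
      rw [Equiv.symm_apply_apply]
      rfl
    have hne : exteriorPower.ιMulti_family k d v full ≠ 0 :=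
      (exteriorPower.ιMulti_family_linearIndependent_field d hv).ne_zero full
    rwa [ne_eq, ← Subtype.coe_inj, exteriorPower.ιMulti_family_apply_coe,
      ExteriorAlgebra.ιMulti_family, hfull] at hne

lemma ιMulti_mul_ιMulti_ne_zero_iff_isCompl [FiniteDimensional k V] {m p : ℕ}
    (hmp : m + p = finrank k V) {a : Fin m → V} {b : Fin p → V} :
    ExteriorAlgebra.ιMulti k m a * ExteriorAlgebra.ιMulti k p b ≠ 0 ↔
      IsCompl (Submodule.span k (Set.range a)) (Submodule.span k (Set.range b)) := by
  rw [ExteriorAlgebra.ιMulti_mul_ιMulti, ιMulti_ne_zero_iff_linearIndependent,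
    linearIndependent_append_iff_isCompl hmp]

lemma wedgeRealizable_iff {d : ℕ} {W : Submodule k (ExteriorAlgebra k V)} :
    WedgeRealizable d W ↔
      ∃ v : Fin d → V, LinearIndependent k v ∧ ExteriorAlgebra.ιMulti k d v ∈ W :=
  exists_congr fun _ => and_congr_right fun hv =>
    and_iff_left (ιMulti_ne_zero_iff_linearIndependent.2 hv)

lemma mem_wedgeAnnihilator_span {s : Set (ExteriorAlgebra k V)} {y : ExteriorAlgebra k V} :
    y ∈ wedgeAnnihilator (Submodule.span k s) ↔ ∀ x ∈ s, x * y = 0 :=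
  Submodule.span_le (p := LinearMap.ker (LinearMap.mulRight k y))

section OrbitSpan

variable {R Γ M : Type*} [CommSemiring R] [Monoid Γ] [AddCommMonoid M] [Module R M]

/-- The span of the orbit of `x` under `ρ`, i.e. the smallest invariant submodule containing `x`. -/
def orbitSpan (ρ : Representation R Γ M) (x : M) : Submodule R M :=
  Submodule.span R (Set.range fun g => ρ g x)

lemma mem_orbitSpan_self (ρ : Representation R Γ M) (x : M) : x ∈ orbitSpan ρ x :=
  Submodule.subset_span ⟨1, LinearMap.congr_fun (map_one ρ) x⟩

lemma orbitSpan_mem_invtSubmodule (ρ : Representation R Γ M) (x : M) :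
    orbitSpan ρ x ∈ ρ.invtSubmodule := by
  refine ρ.mem_invtSubmodule.2 fun g => Submodule.span_le.2 ?_
  rintro _ ⟨h, rfl⟩
  exact Submodule.subset_span ⟨g * h, LinearMap.congr_fun (map_mul ρ g h) x⟩

lemma orbitSpan_le {ρ : Representation R Γ M} {W : Submodule R M} (hW : W ∈ ρ.invtSubmodule)
    {x : M} (hx : x ∈ W) : orbitSpan ρ x ≤ W := by
  rw [orbitSpan, Submodule.span_le]
  rintro _ ⟨g, rfl⟩
  exact ρ.mem_invtSubmodule.1 hW g hx

end OrbitSpan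

section ExteriorAlgebraRep

variable {R Γ M : Type*} [CommRing R] [Monoid Γ] [AddCommGroup M] [Module R M]
  (ρ : Representation R Γ M)

/-- The representation on the exterior algebra induced by `ρ`; it acts by algebra endomorphisms
and restricts to the induced representation on each exterior power. -/
def exteriorAlgebraRep : Representation R Γ (ExteriorAlgebra R M) where
  toFun g := (ExteriorAlgebra.map (ρ g)).toLinearMap
  map_one' := by rw [map_one, Module.End.one_eq_id, ExteriorAlgebra.map_id]; rfl
  map_mul' g h := by
    rw [map_mul, Module.End.mul_eq_comp, ← ExteriorAlgebra.map_comp_map]; rfl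

lemma mem_invtSubmodule_exteriorAlgebraRep_iff {W : Submodule R (ExteriorAlgebra R M)} :
    W ∈ (exteriorAlgebraRep ρ).invtSubmodule ↔
      ∀ g, W.map (ExteriorAlgebra.map (ρ g)).toLinearMap ≤ W := by
  simp only [Representation.mem_invtSubmodule, Module.End.mem_invtSubmodule_iff_map_le]
  rfl

lemma exteriorAlgebraRep_ιMulti (g : Γ) {d : ℕ} (v : Fin d → M) :
    exteriorAlgebraRep ρ g (ExteriorAlgebra.ιMulti R d v) = ExteriorAlgebra.ιMulti R d (ρ g ∘ v) :=
  ExteriorAlgebra.map_apply_ιMulti (ρ g) v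

lemma exteriorAlgebraRep_mul (g : Γ) (x y : ExteriorAlgebra R M) :
    exteriorAlgebraRep ρ g (x * y) = exteriorAlgebraRep ρ g x * exteriorAlgebraRep ρ g y :=
  map_mul (ExteriorAlgebra.map (ρ g)) x y

lemma exteriorPower_mem_invtSubmodule (d : ℕ) :
    ⋀[R]^d M ∈ (exteriorAlgebraRep ρ).invtSubmodule := by
  refine (mem_invtSubmodule_exteriorAlgebraRep_iff ρ).2 fun g => ?_
  rw [Submodule.map_pow, ExteriorAlgebra.ι_range_map_map]
  exact pow_le_pow_left' LinearMap.map_le_range d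

end ExteriorAlgebraRep

lemma wedgeAnnihilator_mem_invtSubmodule {ρ : Representation k G V}
    {W : Submodule k (ExteriorAlgebra k V)} (hW : W ∈ (exteriorAlgebraRep ρ).invtSubmodule) :
    wedgeAnnihilator W ∈ (exteriorAlgebraRep ρ).invtSubmodule := by
  refine (exteriorAlgebraRep ρ).mem_invtSubmodule.2 fun g y hy x hx => ?_
  have hx' : exteriorAlgebraRep ρ g⁻¹ x ∈ W :=
    (exteriorAlgebraRep ρ).mem_invtSubmodule.1 hW g⁻¹ hx
  calc x * exteriorAlgebraRep ρ g y
      = exteriorAlgebraRep ρ g (exteriorAlgebraRep ρ g⁻¹ x * y) := by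
        rw [exteriorAlgebraRep_mul, Representation.self_inv_apply]
    _ = 0 := by rw [hy _ hx', map_zero]

lemma wedgePerp_mem_invtSubmodule {ρ : Representation k G V} (j : ℕ)
    {W : Submodule k (ExteriorAlgebra k V)} (hW : W ∈ (exteriorAlgebraRep ρ).invtSubmodule) :
    wedgePerp j W ∈ (exteriorAlgebraRep ρ).invtSubmodule :=
  Sublattice.inf_mem (exteriorPower_mem_invtSubmodule ρ j) (wedgeAnnihilator_mem_invtSubmodule hW)

lemma isCompl_map_span_iff [FiniteDimensional k V] (ρ : Representation k G V) {m p : ℕ}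
    (hmp : m + p = finrank k V) (g : G) {a : Fin m → V} {b : Fin p → V} :
    IsCompl ((Submodule.span k (Set.range a)).map (ρ g)) (Submodule.span k (Set.range b)) ↔
      exteriorAlgebraRep ρ g (ExteriorAlgebra.ιMulti k m a) * ExteriorAlgebra.ιMulti k p b ≠ 0 := by
  rw [Submodule.map_span, ← Set.range_comp, exteriorAlgebraRep_ιMulti,
    ιMulti_mul_ιMulti_ne_zero_iff_isCompl hmp]

lemma isMThick_iff_forall_linearIndependent [FiniteDimensional k V] (ρ : Representation k G V)
    {m : ℕ} (hm : m ≤ finrank k V) :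
    IsMThick ρ m ↔ ∀ (a : Fin m → V) (b : Fin (finrank k V - m) → V),
      LinearIndependent k a → LinearIndependent k b →
        ∃ g : G, exteriorAlgebraRep ρ g (ExteriorAlgebra.ιMulti k m a) *
          ExteriorAlgebra.ιMulti k (finrank k V - m) b ≠ 0 := by
  simp only [← isCompl_map_span_iff ρ (Nat.add_sub_cancel' hm)]
  constructor
  · intro hthick a b ha hb
    exact hthick _ _ (by rw [finrank_span_eq_card ha, Fintype.card_fin])
      (by rw [finrank_span_eq_card hb, Fintype.card_fin])
  · intro hwedge V₁ V₂ hV₁ hV₂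
    obtain ⟨a, ha, rfl⟩ := exists_linearIndependent_span_eq V₁ hV₁
    obtain ⟨b, hb, rfl⟩ := exists_linearIndependent_span_eq V₂ hV₂
    exact hwedge a b ha hb

/-- Let `V` be an `n`-dimensional representation of `G` and `0 < m < n`. Then `V` is not
`m`-thick iff there exist `G`-invariant realizable subspaces `W₁ ⊆ ⋀^m V` and
`W₂ ⊆ ⋀^{n-m} V` with `W₁^⊥ = W₂`. -/
theorem not_mThick_iff [FiniteDimensional k V] (ρ : Representation k G V)
    (n m : ℕ) (hn : finrank k V = n) (h0 : 0 < m) (hm : m < n) :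
    ¬ IsMThick ρ m ↔
    ∃ W₁ W₂ : Submodule k (ExteriorAlgebra k V),
      W₁ ≤ ⋀[k]^m V ∧ W₂ ≤ ⋀[k]^(n - m) V ∧
      (∀ g : G, W₁.map (ExteriorAlgebra.map (ρ g)).toLinearMap ≤ W₁) ∧
      (∀ g : G, W₂.map (ExteriorAlgebra.map (ρ g)).toLinearMap ≤ W₂) ∧
      WedgeRealizable m W₁ ∧ WedgeRealizable (n - m) W₂ ∧
      wedgePerp (n - m) W₁ = W₂ := by
  subst hn
  simp only [isMThick_iff_forall_linearIndependent ρ hm.le, wedgeRealizable_iff,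
    ← mem_invtSubmodule_exteriorAlgebraRep_iff]
  push Not
  constructor
  · rintro ⟨a, b, ha, hb, hab⟩
    have hinv := orbitSpan_mem_invtSubmodule (exteriorAlgebraRep ρ) (ExteriorAlgebra.ιMulti k m a)
    refine ⟨_, _, orbitSpan_le (exteriorPower_mem_invtSubmodule ρ m)
        (ExteriorAlgebra.ιMulti_range k m ⟨a, rfl⟩), inf_le_left, hinv,
      wedgePerp_mem_invtSubmodule _ hinv, ⟨a, ha, mem_orbitSpan_self _ _⟩, ⟨b, hb, ?_⟩, rfl⟩
    exact ⟨ExteriorAlgebra.ιMulti_range k _ ⟨b, rfl⟩,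
      mem_wedgeAnnihilator_span.2 (Set.forall_mem_range.2 hab)⟩
  · rintro ⟨W₁, _, -, -, hinv, -, ⟨a, ha, haW₁⟩, ⟨b, hb, hbW₁⟩, rfl⟩
    exact ⟨a, b, ha, hb, fun g =>
      hbW₁.2 _ ((exteriorAlgebraRep ρ).mem_invtSubmodule.1 hinv g haW₁)⟩
end

section
/- For n ≥ 1, the standard representation of the special orthogonal group SO_{2n+1}(ℂ) on ℂ^{2n+1} is dense; that is, for every integer m with 0 < m < 2n+1, the induced representation of SO_{2n+1}(ℂ) on ⋀^m ℂ^{2n+1} is irreducible. -/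
open Module Matrix

/-!
Let `e_S`, for `S ⊆ {1, …, N}` with `|S| = m`, be the standard basis of `⋀^m K^N`. A diagonal sign
matrix `diag(d)` multiplies `e_S` by `∏_{i ∈ S} d_i`. Signs with `∏ d_i = 1` distinguish any two
sets which are neither equal nor complementary, and sets of equal size `m ≠ N / 2` are never
complementary. So the `e_S` are joint eigenvectors with pairwise distinct weights for the diagonal
part of `SO_N`, and a nonzero invariant subspace contains some `e_S`. Permutation matrices, after
one sign is changed to make the determinant `1`, carry `e_S` to a multiple of any other `e_T`.
-/

section JointEigenvectors

variable {K V σ τ : Type*} [Field K] [AddCommGroup V] [Module K V]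

lemma mem_of_sum_mem_of_joint_eigenvectors {W : Submodule K V} {T : τ → End K V}
    (hW : ∀ i, ∀ w ∈ W, T i w ∈ W) {μ : σ → τ → K} (hμ : Function.Injective μ)
    {x : σ → V} (hx : ∀ s i, T i (x s) = μ s i • x s) {F : Finset σ}
    (hsum : ∑ s ∈ F, x s ∈ W) : ∀ s ∈ F, x s ∈ W := by
  classical
  induction F using Finset.induction_on generalizing x with
  | empty => simp
  | insert t F ht ih =>
    have mem_of_mem : ∀ s ∈ F, x s ∈ W := by
      intro s hs
      obtain ⟨i, hi⟩ := Function.ne_iff.mp (hμ.ne (ne_of_mem_of_not_mem hs ht))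
      -- `T i - μ t i` kills the term at `t` and rescales the others.
      have hsum' : ∑ r ∈ F, (μ r i - μ t i) • x r ∈ W := by
        have := W.sub_mem (hW i _ hsum) (W.smul_mem (μ t i) hsum)
        rwa [map_sum, Finset.smul_sum, ← Finset.sum_sub_distrib, Finset.sum_insert ht, hx, sub_self,
          zero_add, Finset.sum_congr rfl fun r _ => by rw [hx, ← sub_smul]] at this
      exact (W.smul_mem_iff (sub_ne_zero.mpr hi)).mp
        (ih (fun r j => by rw [map_smul, hx, smul_comm]) hsum' s hs)
    rw [Finset.sum_insert ht] at hsum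
    exact (Finset.forall_mem_insert ..).mpr
      ⟨(W.add_mem_iff_left (W.sum_mem mem_of_mem)).mp hsum, mem_of_mem⟩

end JointEigenvectors

section SignDiagonal

lemma intCast_units_injective {R : Type*} [NonAssocRing R] [NeZero (2 : R)] :
    Function.Injective fun u : ℤˣ => ((u : ℤ) : R) := by
  have two_ne : (1 : R) + 1 ≠ 0 := one_add_one_eq_two (R := R) ▸ two_ne_zero
  intro u v huv
  rcases Int.units_eq_one_or u with rfl | rfl <;> rcases Int.units_eq_one_or v with rfl | rfl <;>
    simp_all [eq_neg_iff_add_eq_zero, neg_eq_iff_add_eq_zero]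

variable {ι : Type*} [Fintype ι]

lemma exists_sign_prod_ne [DecidableEq ι] {s t : Finset ι} (hne : s ≠ t) (hcompl : s ≠ tᶜ) :
    ∃ d : ι → ℤˣ, ∏ i, d i = 1 ∧ ∏ i ∈ s, d i ≠ ∏ i ∈ t, d i := by
  obtain ⟨i, hi⟩ : ∃ i, ¬(i ∈ s ↔ i ∈ t) := by simpa [Finset.ext_iff] using hne
  obtain ⟨j, hj⟩ : ∃ j, ¬(j ∈ s ↔ j ∉ t) := by simpa [Finset.ext_iff] using hcompl
  refine ⟨Pi.mulSingle i (-1) * Pi.mulSingle j (-1), ?_, ?_⟩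
  · simp [Finset.prod_mul_distrib]
  · simp only [Pi.mul_apply, Finset.prod_mul_distrib, Finset.prod_pi_mulSingle']
    by_cases i ∈ s <;> by_cases i ∈ t <;> by_cases j ∈ s <;> by_cases j ∈ t <;> simp_all

lemma exists_sign_prod_ne_of_two_mul_ne_card {m : ℕ} (hm : 2 * m ≠ Fintype.card ι)
    {s t : Set.powersetCard ι m} (hne : s ≠ t) :
    ∃ d : ι → ℤˣ, ∏ i, d i = 1 ∧ ∏ i ∈ s.val, d i ≠ ∏ i ∈ t.val, d i := by
  classical
  refine exists_sign_prod_ne (Subtype.coe_ne_coe.mpr hne) fun hcompl => hm ?_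
  have hcard := Finset.card_add_card_compl t.val
  rw [← hcompl, Set.powersetCard.card_eq, Set.powersetCard.card_eq] at hcard
  rw [two_mul, hcard]

variable [DecidableEq ι] {R : Type*} [CommRing R]

/-- The diagonal matrix with entries `d i = ±1`; those with `∏ i, d i = 1` form the diagonal
subgroup of the special orthogonal group, whose weights separate the `e_s`. -/
def signDiagonal (R : Type*) [CommRing R] (d : ι → ℤˣ) : Matrix ι ι R :=
  diagonal fun i => ((d i : ℤ) : R)

lemma signDiagonal_transpose_mul_self (d : ι → ℤˣ) :
    (signDiagonal R d)ᵀ * signDiagonal R d = 1 := by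
  simp [signDiagonal, ← Int.cast_mul, ← Units.val_mul]

lemma det_signDiagonal (d : ι → ℤˣ) : (signDiagonal R d).det = ((∏ i, d i : ℤˣ) : ℤ) := by
  simp [signDiagonal]

lemma signDiagonal_mulVec_single (d : ι → ℤˣ) (i : ι) :
    signDiagonal R d *ᵥ Pi.single i 1 = ((d i : ℤ) : R) • Pi.single i 1 := by
  rw [signDiagonal, diagonal_mulVec_single, mul_one, ← Pi.single_smul, smul_eq_mul, mul_one]

end SignDiagonal

section ExteriorPower

variable {R M ι : Type*} [CommRing R] [AddCommGroup M] [Module R M] [LinearOrder ι] {m : ℕ}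

lemma exteriorPower_ne_bot [Nontrivial R] [Module.Free R M] [Module.Finite R M]
    (hm : m ≤ finrank R M) : ⋀[R]^m M ≠ ⊥ := by
  intro h
  have hrank := exteriorPower.finrank_eq R m (M := M)
  rw [h, finrank_bot] at hrank
  exact (Nat.choose_pos hm).ne hrank

lemma map_ιMulti_family_of_eigenvectors {f : M →ₗ[R] M} {v : ι → M} {c : ι → R}
    (hf : ∀ i, f (v i) = c i • v i) (s : Set.powersetCard ι m) :
    ExteriorAlgebra.map f (ExteriorAlgebra.ιMulti_family R m v s) =
      (∏ i ∈ s.val, c i) • ExteriorAlgebra.ιMulti_family R m v s := by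
  set e := Set.powersetCard.ofFinEmbEquiv.symm s
  have hprod : ∏ k, c (e k) = ∏ i ∈ s.val, c i := by
    rw [← Finset.map_orderEmbOfFin_univ s.val s.prop, Finset.prod_map]
    rfl
  rw [ExteriorAlgebra.ιMulti_family, ExteriorAlgebra.map_apply_ιMulti, ← hprod,
    ← AlternatingMap.map_smul_univ]
  exact congrArg _ (funext fun k => hf (e k))

lemma exists_perm_ιMulti_family_comp [Finite ι] (s t : Set.powersetCard ι m) :
    ∃ σ : Equiv.Perm ι, ∀ v : ι → M,
      ExteriorAlgebra.ιMulti_family R m (v ∘ σ) s = ExteriorAlgebra.ιMulti_family R m v t := by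
  obtain ⟨σ, hσ⟩ := Equiv.Perm.exists_extending_pair
    (Set.powersetCard.ofFinEmbEquiv.symm s) (Set.powersetCard.ofFinEmbEquiv.symm t)
    (Set.powersetCard.ofFinEmbEquiv.symm s).injective
    (Set.powersetCard.ofFinEmbEquiv.symm t).injective
  refine ⟨σ, fun v => congrArg (ExteriorAlgebra.ιMulti R m) (funext fun k => ?_)⟩
  exact congrArg v (hσ k)

end ExteriorPower

section StandardBasis

variable {ι R : Type*} [LinearOrder ι] [CommRing R] {m : ℕ}

/-- The basis vector `e_s = e_{i₁} ∧ ⋯ ∧ e_{iₘ}` of `⋀^m R^ι` attached to the `m`-element set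
`s = {i₁ < ⋯ < iₘ}`. -/
noncomputable abbrev wedgeBasis (R : Type*) [CommRing R] (s : Set.powersetCard ι m) :
    ExteriorAlgebra R (ι → R) :=
  ExteriorAlgebra.ιMulti_family R m (fun i => Pi.single i 1) s

lemma span_range_wedgeBasis [Finite ι] :
    Submodule.span R (Set.range (wedgeBasis (ι := ι) (m := m) R)) = ⋀[R]^m (ι → R) := by
  cases nonempty_fintype ι
  refine exteriorPower.ιMulti_family_span_fixedDegree_of_span R ?_
  simpa only [← Pi.basisFun_apply] using (Pi.basisFun R ι).span_eq

variable [Fintype ι]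

lemma map_signDiagonal_wedgeBasis (d : ι → ℤˣ) (s : Set.powersetCard ι m) :
    ExteriorAlgebra.map (signDiagonal R d).mulVecLin (wedgeBasis R s) =
      (((∏ i ∈ s.val, d i : ℤˣ) : ℤ) : R) • wedgeBasis R s := by
  rw [Units.coe_prod, Int.cast_prod]
  exact map_ιMulti_family_of_eigenvectors (signDiagonal_mulVec_single d) s

lemma exists_map_permMatrix_wedgeBasis (s t : Set.powersetCard ι m) :
    ∃ σ : Equiv.Perm ι,
      ExteriorAlgebra.map (σ.permMatrix R).mulVecLin (wedgeBasis R s) = wedgeBasis R t := by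
  obtain ⟨σ, hσ⟩ := exists_perm_ιMulti_family_comp (R := R) (M := ι → R) s t
  refine ⟨σ⁻¹, ?_⟩
  rw [wedgeBasis, wedgeBasis, ← hσ, ExteriorAlgebra.ιMulti_family, ExteriorAlgebra.map_apply_ιMulti]
  refine congrArg (ExteriorAlgebra.ιMulti R m) (funext fun k => ?_)
  ext j
  simp [Pi.single_apply, Equiv.Perm.inv_def, Equiv.symm_apply_eq]

lemma exists_map_wedgeBasis_eq_smul [Nonempty ι] (s t : Set.powersetCard ι m) :
    ∃ A : Matrix ι ι R, Aᵀ * A = 1 ∧ A.det = 1 ∧ ∃ u : Rˣ,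
      ExteriorAlgebra.map A.mulVecLin (wedgeBasis R s) = u • wedgeBasis R t := by
  obtain ⟨σ, hσ⟩ := exists_map_permMatrix_wedgeBasis (R := R) s t
  let d : ι → ℤˣ := Pi.mulSingle (Classical.arbitrary ι) σ.sign
  refine ⟨signDiagonal R d * σ.permMatrix R, ?_, ?_,
    Units.map (Int.castRingHom R) (∏ i ∈ t.val, d i), ?_⟩
  · rw [transpose_mul, Matrix.mul_assoc, ← Matrix.mul_assoc (signDiagonal R d)ᵀ,
      signDiagonal_transpose_mul_self, Matrix.one_mul, transpose_permMatrix, ← permMatrix_mul,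
      mul_inv_cancel, permMatrix_one]
  · rw [det_mul, det_signDiagonal, det_permutation, Fintype.prod_pi_mulSingle', ← Int.cast_mul,
      ← Units.val_mul, Int.units_mul_self, Units.val_one, Int.cast_one]
  · rw [mulVecLin_mul, ← ExteriorAlgebra.map_comp_map, AlgHom.comp_apply, hσ,
      map_signDiagonal_wedgeBasis]
    rfl

end StandardBasis

section Invariant

/-- Stability of a submodule of the exterior algebra of `R^ι` under the action induced by the
special orthogonal group of the form `∑ i, x i ^ 2`. -/
def IsSOInvariant {ι R : Type*} [Fintype ι] [DecidableEq ι] [CommRing R]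
    (W : Submodule R (ExteriorAlgebra R (ι → R))) : Prop :=
  ∀ A : Matrix ι ι R, Aᵀ * A = 1 → A.det = 1 →
    W.map (ExteriorAlgebra.map A.mulVecLin).toLinearMap ≤ W

namespace IsSOInvariant

lemma map_mem {ι R : Type*} [Fintype ι] [DecidableEq ι] [CommRing R]
    {W : Submodule R (ExteriorAlgebra R (ι → R))} (hW : IsSOInvariant W) {A : Matrix ι ι R}
    (hA : Aᵀ * A = 1) (hdet : A.det = 1) {w : ExteriorAlgebra R (ι → R)} (hw : w ∈ W) :
    ExteriorAlgebra.map A.mulVecLin w ∈ W :=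
  hW A hA hdet (Submodule.mem_map_of_mem hw)

variable {ι : Type*} [Fintype ι] [LinearOrder ι] {m : ℕ}

lemma exteriorPower_le {R : Type*} [CommRing R] {W : Submodule R (ExteriorAlgebra R (ι → R))}
    [Nonempty ι] (hW : IsSOInvariant W) {s : Set.powersetCard ι m} (hs : wedgeBasis R s ∈ W) :
    ⋀[R]^m (ι → R) ≤ W := by
  rw [← span_range_wedgeBasis, Submodule.span_le]
  rintro _ ⟨t, rfl⟩
  obtain ⟨A, hA, hdet, u, hu⟩ := exists_map_wedgeBasis_eq_smul (R := R) s t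
  exact (W.smul_mem_iff_of_isUnit u.isUnit).mp (hu ▸ hW.map_mem hA hdet hs)

lemma exists_wedgeBasis_mem {K : Type*} [Field K] [NeZero (2 : K)]
    {W : Submodule K (ExteriorAlgebra K (ι → K))} (hW : IsSOInvariant W)
    (hle : W ≤ ⋀[K]^m (ι → K)) (hbot : W ≠ ⊥) (hm : 2 * m ≠ Fintype.card ι) :
    ∃ s : Set.powersetCard ι m, wedgeBasis K s ∈ W := by
  obtain ⟨w, hw, hw0⟩ := Submodule.exists_mem_ne_zero_of_ne_bot hbot
  obtain ⟨a, ha⟩ : ∃ a : Set.powersetCard ι m → K, ∑ s, a s • wedgeBasis K s = w := by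
    rw [← Submodule.mem_span_range_iff_exists_fun, span_range_wedgeBasis]
    exact hle hw
  subst ha
  obtain ⟨s, hs, has⟩ := Finset.exists_ne_zero_of_sum_ne_zero hw0
  let T (d : {d : ι → ℤˣ // ∏ i, d i = 1}) :=
    (ExteriorAlgebra.map (signDiagonal K d.val).mulVecLin).toLinearMap
  let weight (s : Set.powersetCard ι m) (d : {d : ι → ℤˣ // ∏ i, d i = 1}) : K :=
    ((∏ i ∈ s.val, d.val i : ℤˣ) : ℤ)
  have T_mem d (w) (hw : w ∈ W) : T d w ∈ W :=
    hW.map_mem (signDiagonal_transpose_mul_self d.val) (by simp [det_signDiagonal, d.prop]) hw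
  have weight_injective : Function.Injective weight := by
    intro s t hst
    by_contra hne
    obtain ⟨d, hd, hprod⟩ := exists_sign_prod_ne_of_two_mul_ne_card hm hne
    exact hprod (intCast_units_injective (congrFun hst ⟨d, hd⟩))
  have T_apply s d : T d (a s • wedgeBasis K s) = weight s d • a s • wedgeBasis K s := by
    rw [map_smul, AlgHom.toLinearMap_apply, map_signDiagonal_wedgeBasis, smul_comm]
  exact ⟨s, (W.smul_mem_iff (left_ne_zero_of_smul has)).mp
    (mem_of_sum_mem_of_joint_eigenvectors T_mem weight_injective T_apply hw s hs)⟩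

end IsSOInvariant

end Invariant

theorem soOddC_standard_dense_general {ι K : Type*} [Fintype ι] [LinearOrder ι] [Field K]
    [NeZero (2 : K)] {m : ℕ} (hle : m ≤ Fintype.card ι) (hne : 2 * m ≠ Fintype.card ι) :
    ⋀[K]^m (ι → K) ≠ ⊥ ∧
    ∀ W : Submodule K (ExteriorAlgebra K (ι → K)), W ≤ ⋀[K]^m (ι → K) → IsSOInvariant W →
      W = ⊥ ∨ W = ⋀[K]^m (ι → K) := by
  have : Nonempty ι := Fintype.card_pos_iff.mp (by omega)
  refine ⟨exteriorPower_ne_bot (by rwa [finrank_fintype_fun_eq_card]), fun W hWm hW => ?_⟩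
  refine or_iff_not_imp_left.mpr fun hbot => ?_
  obtain ⟨s, hs⟩ := hW.exists_wedgeBasis_mem hWm hbot hne
  exact le_antisymm hWm (hW.exteriorPower_le hs)

/-- For `n ≥ 1`, the standard representation of `SO_{2n+1}(ℂ)` (complex matrices `A` with
`AᵀA = 1` and `det A = 1`) on `ℂ^{2n+1}` is dense: for every `0 < m < 2n+1`, the induced
representation on `⋀^m ℂ^{2n+1}` is irreducible. -/
theorem soOddC_standard_dense (n : ℕ) (hn : 1 ≤ n) (m : ℕ) (h0 : 0 < m) (hm : m < 2 * n + 1) :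
    ⋀[ℂ]^m (Fin (2 * n + 1) → ℂ) ≠ ⊥ ∧
    ∀ W : Submodule ℂ (ExteriorAlgebra ℂ (Fin (2 * n + 1) → ℂ)),
      W ≤ ⋀[ℂ]^m (Fin (2 * n + 1) → ℂ) →
      (∀ A : Matrix (Fin (2 * n + 1)) (Fin (2 * n + 1)) ℂ, Aᵀ * A = 1 → A.det = 1 →
        W.map (ExteriorAlgebra.map A.mulVecLin).toLinearMap ≤ W) →
      W = ⊥ ∨ W = ⋀[ℂ]^m (Fin (2 * n + 1) → ℂ) := by
  refine soOddC_standard_dense_general ?_ ?_ <;> rw [Fintype.card_fin] <;> omega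
end
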